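/- arXiv:math/0401163 — 2 statements merged into one kernel-verified Lean document; each statement's English description precedes it below -/
import Mathlib

section
/- Fix λ, μ ∈ ℚ. Let A, B, C be square rational matrices of sizes p×p, q×q, s×s respectively, with p+q and q+s even, and suppose det(λB + μBᵀ) ≠ 0. If A ⊞ (−B) is rationally null-cobordant and B ⊞ (−C) is rationally null-cobordant, then A ⊞ (−C) is rationally null-cobordant. (This is the transitivity underlying the fact that rational cobordism classes of square rational matrices A with det(λA + μAᵀ) ≠ 0 form an abelian group under block sum.) -/
open Matrix

/-- A square matrix over a commutative ring is *null-cobordant* if its size is even,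
say `n = 2 * r`, and it is congruent, via a matrix `P` with unit determinant, to a
block matrix whose upper-left `r × r` block is zero. -/
def Matrix.IsNullCobordant {R : Type*} [CommRing R] {n : ℕ}
    (A : Matrix (Fin n) (Fin n) R) : Prop :=
  ∃ r : ℕ, n = 2 * r ∧ ∃ P : Matrix (Fin n) (Fin n) R, IsUnit P.det ∧
    ∀ i j : Fin n, (i : ℕ) < r → (j : ℕ) < r → (Pᵀ * A * P) i j = 0

/-- The block sum `A ⊞ B` of square matrices: the block-diagonal matrix `[[A,0],[0,B]]`. -/
def Matrix.blockSum {R : Type*} [CommRing R] {p q : ℕ}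
    (A : Matrix (Fin p) (Fin p) R) (B : Matrix (Fin q) (Fin q) R) :
    Matrix (Fin (p + q)) (Fin (p + q)) R :=
  Matrix.reindex finSumFinEquiv finSumFinEquiv (Matrix.fromBlocks A 0 0 B)

/-- The obvious linear equivalence `R^p × R^q ≃ R^(p+q)`. -/
noncomputable def prodFinEquiv (p q : ℕ) :
    ((Fin p → ℚ) × (Fin q → ℚ)) ≃ₗ[ℚ] (Fin (p + q) → ℚ) :=
  (LinearEquiv.sumArrowLequivProdArrow (Fin p) (Fin q) ℚ ℚ).symm.trans
    (LinearEquiv.funCongrLeft ℚ ℚ finSumFinEquiv.symm)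

theorem prodFinEquiv_apply (p q : ℕ) (x : (Fin p → ℚ) × (Fin q → ℚ)) :
    prodFinEquiv p q x = Sum.elim x.1 x.2 ∘ finSumFinEquiv.symm := by
  ext i
  simp only [prodFinEquiv, LinearEquiv.trans_apply, LinearEquiv.funCongrLeft_apply,
    LinearMap.funLeft_apply, Function.comp]
  cases finSumFinEquiv.symm i <;> rfl

theorem blockSum_form {p q : ℕ} (A : Matrix (Fin p) (Fin p) ℚ) (B : Matrix (Fin q) (Fin q) ℚ)
    (x y : (Fin p → ℚ) × (Fin q → ℚ)) :
    prodFinEquiv p q x ⬝ᵥ (A.blockSum B *ᵥ prodFinEquiv p q y)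
      = x.1 ⬝ᵥ (A *ᵥ y.1) + x.2 ⬝ᵥ (B *ᵥ y.2) := by
  rw [prodFinEquiv_apply, prodFinEquiv_apply, Matrix.blockSum, Matrix.reindex_apply,
    Matrix.submatrix_mulVec_equiv, comp_equiv_dotProduct_comp_equiv]
  simp [Matrix.fromBlocks_mulVec, Function.comp_assoc]

theorem nullCobordant_imp {n : ℕ} (A : Matrix (Fin n) (Fin n) ℚ) (h : A.IsNullCobordant) :
    ∃ W : Submodule ℚ (Fin n → ℚ), n ≤ 2 * Module.finrank ℚ W ∧
      ∀ x ∈ W, ∀ y ∈ W, x ⬝ᵥ (A *ᵥ y) = 0 := by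
  obtain ⟨r, hn, P, hP, h⟩ := h
  have hr : r ≤ n := by omega
  let Q : Matrix (Fin n) (Fin r) ℚ := P.submatrix id (Fin.castLE hr)
  have hQ : Qᵀ * A * Q = 0 := by
    ext i j
    have := h (Fin.castLE hr i) (Fin.castLE hr j) (by simp) (by simp)
    simpa [Q, Matrix.mul_apply] using this
  have hinj : Function.Injective Q.mulVec := by
    rw [Matrix.mulVec_injective_iff]
    have hPi : LinearIndependent ℚ P.col := by
      rw [← Matrix.mulVec_injective_iff]
      exact Matrix.mulVec_injective_of_isUnit ((Matrix.isUnit_iff_isUnit_det P).2 hP)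
    exact hPi.comp (Fin.castLE hr) (Fin.castLE_injective hr)
  refine ⟨LinearMap.range Q.mulVecLin, ?_, ?_⟩
  · rw [LinearMap.finrank_range_of_inj (f := Q.mulVecLin) hinj]
    simp [hn]
  · rintro _ ⟨v, rfl⟩ _ ⟨w, rfl⟩
    simp only [Matrix.mulVecLin_apply]
    rw [Matrix.dotProduct_mulVec, ← Matrix.vecMul_transpose, Matrix.vecMul_vecMul,
      Matrix.dotProduct_mulVec, Matrix.vecMul_vecMul, hQ]
    simp

theorem nullCobordant_of {n : ℕ} (A : Matrix (Fin n) (Fin n) ℚ) (hn : Even n)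
    (W : Submodule ℚ (Fin n → ℚ)) (hW : n ≤ 2 * Module.finrank ℚ W)
    (h : ∀ x ∈ W, ∀ y ∈ W, x ⬝ᵥ (A *ᵥ y) = 0) : A.IsNullCobordant := by
  obtain ⟨r, hr⟩ := hn
  obtain ⟨W', hc⟩ := Submodule.exists_isCompl W
  have hd := Submodule.finrank_add_eq_of_isCompl hc
  rw [Module.finrank_fin_fun] at hd
  let e : Fin (Module.finrank ℚ W) ⊕ Fin (Module.finrank ℚ W') ≃ Fin n :=
    finSumFinEquiv.trans (finCongr hd)
  let b : Module.Basis (Fin n) ℚ (Fin n → ℚ) :=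
    ((((Module.finBasis ℚ W).prod (Module.finBasis ℚ W')).map
      (Submodule.prodEquivOfIsCompl W W' hc))).reindex e
  have hb : ∀ i : Fin n, (i : ℕ) < r → b i ∈ W := by
    intro i hi
    have hi' : (i : ℕ) < Module.finrank ℚ W := by omega
    have : i = e (Sum.inl ⟨i, hi'⟩) := by ext; simp [e]
    rw [this]
    simp [b]
  refine ⟨r, by omega, (Matrix.of fun i j => b j i), ?_, ?_⟩
  · have : (Matrix.of fun i j => b j i) = (Pi.basisFun ℚ (Fin n)).toMatrix b := by
      ext i j; simp [Module.Basis.toMatrix_apply]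
    rw [this, ← Module.Basis.det_apply]
    exact Module.Basis.isUnit_det _ _
  · intro i j hi hj
    have := h _ (hb i hi) _ (hb j hj)
    rw [Matrix.dotProduct_mulVec] at this
    rw [← this]
    rfl

theorem blockSum_imp {p q : ℕ} (A : Matrix (Fin p) (Fin p) ℚ) (B : Matrix (Fin q) (Fin q) ℚ)
    (h : (A.blockSum (-B)).IsNullCobordant) :
    ∃ W : Submodule ℚ ((Fin p → ℚ) × (Fin q → ℚ)), p + q ≤ 2 * Module.finrank ℚ W ∧
      ∀ x ∈ W, ∀ y ∈ W, x.1 ⬝ᵥ (A *ᵥ y.1) = x.2 ⬝ᵥ (B *ᵥ y.2) := by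
  obtain ⟨W, h1, h2⟩ := nullCobordant_imp _ h
  refine ⟨W.map (prodFinEquiv p q).symm.toLinearMap, ?_, ?_⟩
  · rwa [LinearEquiv.finrank_map_eq]
  · rintro _ ⟨x, hx, rfl⟩ _ ⟨y, hy, rfl⟩
    have := blockSum_form A (-B) ((prodFinEquiv p q).symm x) ((prodFinEquiv p q).symm y)
    rw [LinearEquiv.apply_symm_apply, LinearEquiv.apply_symm_apply, h2 x hx y hy,
      Matrix.neg_mulVec, dotProduct_neg] at this
    simp only [LinearEquiv.coe_coe]
    linarith

theorem blockSum_of {p q : ℕ} (A : Matrix (Fin p) (Fin p) ℚ) (B : Matrix (Fin q) (Fin q) ℚ)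
    (hn : Even (p + q))
    (W : Submodule ℚ ((Fin p → ℚ) × (Fin q → ℚ))) (hW : p + q ≤ 2 * Module.finrank ℚ W)
    (h : ∀ x ∈ W, ∀ y ∈ W, x.1 ⬝ᵥ (A *ᵥ y.1) = x.2 ⬝ᵥ (B *ᵥ y.2)) :
    (A.blockSum (-B)).IsNullCobordant := by
  refine nullCobordant_of _ hn (W.map (prodFinEquiv p q).toLinearMap) ?_ ?_
  · rwa [LinearEquiv.finrank_map_eq]
  · rintro _ ⟨x, hx, rfl⟩ _ ⟨y, hy, rfl⟩
    simp only [LinearEquiv.coe_coe]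
    rw [blockSum_form, Matrix.neg_mulVec, dotProduct_neg, h x hx y hy]
    ring

/-- Transitivity of rational cobordism for square rational matrices `A`, `B`, `C` with
`det (λB + μBᵀ) ≠ 0`: if `A ⊞ (−B)` and `B ⊞ (−C)` are rationally null-cobordant, then so
is `A ⊞ (−C)`. -/
theorem rat_cobordant_trans (lam mu : ℚ) (p q s : ℕ)
    (hpq : Even (p + q)) (hqs : Even (q + s))
    (A : Matrix (Fin p) (Fin p) ℚ) (B : Matrix (Fin q) (Fin q) ℚ)
    (C : Matrix (Fin s) (Fin s) ℚ)
    (hB : (lam • B + mu • Bᵀ).det ≠ 0)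
    (hAB : (A.blockSum (-B)).IsNullCobordant)
    (hBC : (B.blockSum (-C)).IsNullCobordant) :
    (A.blockSum (-C)).IsNullCobordant := by
  obtain ⟨H, hH, hH'⟩ := blockSum_imp A B hAB
  obtain ⟨K, hK, hK'⟩ := blockSum_imp B C hBC
  let f : (H × K) →ₗ[ℚ] (Fin q → ℚ) :=
    (LinearMap.snd ℚ _ _ ∘ₗ H.subtype) ∘ₗ LinearMap.fst ℚ H K -
      (LinearMap.fst ℚ _ _ ∘ₗ K.subtype) ∘ₗ LinearMap.snd ℚ H K
  let g : (H × K) →ₗ[ℚ] (Fin p → ℚ) × (Fin s → ℚ) :=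
    ((LinearMap.fst ℚ _ _ ∘ₗ H.subtype) ∘ₗ LinearMap.fst ℚ H K).prod
      ((LinearMap.snd ℚ _ _ ∘ₗ K.subtype) ∘ₗ LinearMap.snd ℚ H K)
  have hf : ∀ z, f z = z.1.1.2 - z.2.1.1 := fun z => rfl
  have hg : ∀ z, g z = (z.1.1.1, z.2.1.2) := fun z => rfl
  let g' := g.domRestrict (LinearMap.ker f)
  have hps : Even (p + s) := by
    rw [Nat.even_iff] at *; omega
  refine blockSum_of A C hps (LinearMap.range g') ?_ ?_
  · have e1 := LinearMap.finrank_range_add_finrank_ker f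
    have e2 := LinearMap.finrank_range_add_finrank_ker (K := ℚ) (V := LinearMap.ker f) g'
    have e3 := Subspace.finrank_add_finrank_dualAnnihilator_eq (LinearMap.range f)
    rw [Module.finrank_prod] at e1
    rw [Module.finrank_fin_fun] at e3
    set S := lam • B + mu • Bᵀ with hS
    have hSf : ∀ x y : Fin q → ℚ,
        y ⬝ᵥ (S *ᵥ x) = lam * (y ⬝ᵥ (B *ᵥ x)) + mu * (x ⬝ᵥ (B *ᵥ y)) := by
      intro x y
      rw [hS, Matrix.add_mulVec, dotProduct_add, Matrix.smul_mulVec, Matrix.smul_mulVec,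
        dotProduct_smul, dotProduct_smul, Matrix.mulVec_transpose, dotProduct_comm y (x ᵥ* B),
        ← Matrix.dotProduct_mulVec]
      rfl
    let ψ : (Fin q → ℚ) →ₗ[ℚ] Module.Dual ℚ (Fin q → ℚ) :=
      (dotProductBilin ℚ ℚ) ∘ₗ S.mulVecLin
    have hψ : ∀ x y, ψ x y = y ⬝ᵥ (S *ᵥ x) := fun x y => dotProduct_comm (S *ᵥ x) y
    have hψi : ∀ x, ψ x = 0 → x = 0 := by
      intro x hx
      have h0 : S *ᵥ x = 0 := by
        apply dotProduct_eq_zero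
        intro w
        exact DFunLike.congr_fun hx w
      exact Matrix.eq_zero_of_mulVec_eq_zero hB h0
    let j0 : LinearMap.ker g' →ₗ[ℚ] Module.Dual ℚ (Fin q → ℚ) :=
      ψ ∘ₗ (LinearMap.snd ℚ _ _ ∘ₗ H.subtype) ∘ₗ LinearMap.fst ℚ H K ∘ₗ
        (LinearMap.ker f).subtype ∘ₗ (LinearMap.ker g').subtype
    have hker : ∀ z : LinearMap.ker g', z.1.1.1.1.2 = z.1.1.2.1.1 ∧ z.1.1.1.1.1 = 0 ∧
        z.1.1.2.1.2 = 0 := by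
      intro z
      have h1 : f z.1.1 = 0 := z.1.2
      have h2 : g z.1.1 = 0 := z.2
      rw [hf, sub_eq_zero] at h1
      rw [hg, Prod.mk_eq_zero] at h2
      exact ⟨h1, h2⟩
    have hj0 : ∀ z, j0 z = ψ z.1.1.1.1.2 := fun z => rfl
    have hmem : ∀ z, j0 z ∈ (LinearMap.range f).dualAnnihilator := by
      intro z
      obtain ⟨k1, k2, k3⟩ := hker z
      rw [Submodule.mem_dualAnnihilator]
      rintro _ ⟨w, rfl⟩
      rw [hj0, hf, map_sub, hψ, hψ, hSf, hSf]
      have a1 := hH' _ w.1.2 _ z.1.1.1.2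
      have a2 := hH' _ z.1.1.1.2 _ w.1.2
      have a3 := hK' _ w.2.2 _ z.1.1.2.2
      have a4 := hK' _ z.1.1.2.2 _ w.2.2
      rw [k2] at a1 a2
      rw [k3, ← k1] at a3 a4
      simp only [Matrix.mulVec_zero, dotProduct_zero, zero_dotProduct] at a1 a2 a3 a4
      rw [← a1, ← a2, a3, a4]
      ring
    have hinj : Function.Injective (j0.codRestrict _ hmem) := by
      intro z w hzw
      have hz : ψ z.1.1.1.1.2 = ψ w.1.1.1.1.2 := congrArg Subtype.val hzw
      obtain ⟨k1, k2, k3⟩ := hker z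
      obtain ⟨l1, l2, l3⟩ := hker w
      have k0 : z.1.1.1.1.2 = w.1.1.1.1.2 :=
        sub_eq_zero.1 (hψi _ (by rw [map_sub, hz, sub_self]))
      exact Subtype.ext (Subtype.ext (Prod.ext (Subtype.ext (Prod.ext (k2.trans l2.symm) k0))
        (Subtype.ext (Prod.ext (k1.symm.trans (k0.trans l1)) (k3.trans l3.symm)))))
    have e4 := LinearMap.finrank_le_finrank_of_injective hinj
    omega
  · rintro _ ⟨x, rfl⟩ _ ⟨y, rfl⟩
    have hx : f x.1 = 0 := x.2
    have hy : f y.1 = 0 := y.2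
    rw [hf, sub_eq_zero] at hx hy
    have a1 := hH' _ x.1.1.2 _ y.1.1.2
    have a2 := hK' _ x.1.2.2 _ y.1.2.2
    rw [hx, hy] at a1
    exact a1.trans a2
end

section
/- Let M be a k×k rational matrix, η a k×1 rational column vector, ξ a 1×k rational row vector, and x, x', y ∈ ℚ. Let M' be the (k+2)×(k+2) rational matrix given in block form (with respect to the decomposition k+2 = k+1+1) by M' = [[M, 0, η],[0, 0, x],[ξ, x', y]], where the 0's denote the zero column, zero row, and zero entry of the appropriate sizes. Then the block sum (−M) ⊞ M' is rationally null-cobordant; that is, M and M' are rationally cobordant. -/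
open Matrix

/-- The stabilized computation on the sum type. -/
lemma enl_aux {k : ℕ} (M : Matrix (Fin k) (Fin k) ℚ) (B : Matrix (Fin k) (Fin 2) ℚ)
    (C : Matrix (Fin 2) (Fin k) ℚ) (D : Matrix (Fin 2) (Fin 2) ℚ) :
    (fromBlocks 1 0 (fromRows 1 0) 1 :
        Matrix (Fin k ⊕ (Fin k ⊕ Fin 2)) (Fin k ⊕ (Fin k ⊕ Fin 2)) ℚ)ᵀ *
      fromBlocks (-M) 0 0 (fromBlocks M B C D) *
      fromBlocks 1 0 (fromRows 1 0) 1 =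
    fromBlocks 0 (fromCols M B) (fromRows M C) (fromBlocks M B C D) := by
  simp only [fromBlocks_transpose, transpose_fromRows, fromBlocks_multiply, fromBlocks_mul_fromRows,
    fromCols_mul_fromBlocks, transpose_one, transpose_zero, one_mul, mul_one, zero_mul, mul_zero,
    Matrix.one_mul, Matrix.mul_one, Matrix.zero_mul, Matrix.mul_zero,
    add_zero, zero_add, fromCols_mul_fromRows, neg_add_cancel]

/-- An enlargement `M' = [[M,0,η],[0,0,x],[ξ,x',y]]` (blocks of sizes `k + 1 + 1`) of a
square rational matrix `M` is rationally cobordant to `M`: the block sum `(−M) ⊞ M'`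
is rationally null-cobordant. -/
theorem enlargement_cobordant (k : ℕ) (M : Matrix (Fin k) (Fin k) ℚ)
    (η ξ : Fin k → ℚ) (x x' y : ℚ) :
    ((-M).blockSum
      (Matrix.reindex finSumFinEquiv finSumFinEquiv
        (Matrix.fromBlocks M
          (Matrix.of fun i (j : Fin 2) => if j = 0 then 0 else η i)
          (Matrix.of fun (i : Fin 2) j => if i = 0 then 0 else ξ j)
          !![0, x; x', y]))).IsNullCobordant := by
  have hA : ∀ A' : Matrix (Fin k ⊕ Fin 2) (Fin k ⊕ Fin 2) ℚ,
      (-M).blockSum (Matrix.reindex finSumFinEquiv finSumFinEquiv A') =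
      (fromBlocks (-M) 0 0 A').submatrix
        (((Equiv.refl _).sumCongr finSumFinEquiv).trans finSumFinEquiv).symm
        (((Equiv.refl _).sumCongr finSumFinEquiv).trans finSumFinEquiv).symm := by
    intro A'
    unfold Matrix.blockSum
    ext i j
    simp only [Matrix.reindex_apply, Matrix.submatrix_apply, Equiv.symm_trans_apply]
    rcases finSumFinEquiv.symm i with a | a <;> rcases finSumFinEquiv.symm j with b | b <;> simp
  rw [hA]
  set e := ((Equiv.refl (Fin k)).sumCongr (finSumFinEquiv (m := k) (n := 2))).trans
    finSumFinEquiv with he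
  let f := e.trans (Equiv.swap (⟨k, by omega⟩ : Fin (k + (k + 2))) ⟨k + k, by omega⟩)
  have key : ∀ s, (f s : ℕ) < k + 1 → (∃ a, s = Sum.inl a) ∨ s = Sum.inr (Sum.inr 0) := by
    intro s hs
    simp only [f, Equiv.trans_apply, Equiv.swap_apply_def] at hs
    rcases s with a | a | a
    · exact Or.inl ⟨a, rfl⟩
    · exfalso
      have ha := a.2
      have hv : (e (Sum.inr (Sum.inl a)) : ℕ) = k + a := by simp [he]
      split_ifs at hs with h1 h2 <;> simp only [Fin.ext_iff] at * <;> omega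
    · right
      have hv : (e (Sum.inr (Sum.inr a)) : ℕ) = k + (k + a) := by simp [he]
      fin_cases a
      · rfl
      · exfalso
        simp only [Fin.mk_one, Fin.val_one] at hv hs
        split_ifs at hs with h1 h2 <;> simp only [Fin.ext_iff] at * <;> omega
  refine ⟨k + 1, by omega, (fromBlocks 1 0 (fromRows 1 0) 1 :
    Matrix (Fin k ⊕ (Fin k ⊕ Fin 2)) (Fin k ⊕ (Fin k ⊕ Fin 2)) ℚ).submatrix e.symm f.symm, ?_, ?_⟩
  · rw [← Matrix.isUnit_iff_isUnit_det, Matrix.isUnit_submatrix_equiv,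
      Matrix.isUnit_iff_isUnit_det, Matrix.det_fromBlocks_zero₁₂]
    simp
  · intro i j hi hj
    rw [Matrix.transpose_submatrix, Matrix.submatrix_mul_equiv, Matrix.submatrix_mul_equiv, enl_aux,
      Matrix.submatrix_apply]
    rcases key (f.symm i) (by simpa using hi) with ⟨a, ha⟩ | ha <;>
    rcases key (f.symm j) (by simpa using hj) with ⟨b, hb⟩ | hb <;>
    rw [ha, hb] <;> simp
end
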